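/- arXiv:1310.4123 — 2 statements merged into one kernel-verified Lean document; each statement's English description precedes it below -/
import Mathlib

section
/- Upwards Induction Theorem (abstract diagram form of the paper's Theorem 'Upwards Induction'). Fix n ∈ ℤ. Assume that the comparison maps φ : K_n → K̄_n and φ : K_{n+1} → K̄_{n+1} are isomorphisms, and that for both ε = 1 and ε = −1 the comparison maps φ : KQ_n^ε → KQ̄_n^ε and the induced maps on Witt groups W_{n+1}^ε → W̄_{n+1}^ε are isomorphisms. Then for both ε = 1 and ε = −1 the comparison maps U_n^ε → Ū_n^ε, V_n^ε → V̄_n^ε, U_{n+1}^ε → Ū_{n+1}^ε, V_{n−1}^ε → V̄_{n−1}^ε, KQ_{n+1}^ε → KQ̄_{n+1}^ε, and the induced maps W_{n+2}^ε → W̄_{n+2}^ε are all isomorphisms. -/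
/-- The map induced by a commuting square on the cokernels of the vertical maps
(used for the Witt groups `W = coker H`). -/
def wittMap {C C' G G' : Type} [AddCommGroup C] [AddCommGroup C']
    [AddCommGroup G] [AddCommGroup G']
    (H : C →+ G) (H' : C' →+ G') (φC : C →+ C') (φG : G →+ G')
    (hcomm : ∀ x : C, φG (H x) = H' (φC x)) :
    G ⧸ H.range →+ G' ⧸ H'.range :=
  QuotientAddGroup.map _ _ φG (by
    rintro g ⟨c, rfl⟩
    exact ⟨φC c, (hcomm c).symm⟩)

theorem ui_exact_lift {C G U K : Type} [AddCommGroup C] [AddCommGroup G] [AddCommGroup U]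
    [AddCommGroup K] (H : C →+ G) (e : G →+ U) (b : U →+ K)
    (h1 : Function.Exact H e) (h2 : Function.Exact e b) :
    ∃ f : G ⧸ H.range →+ U, (∀ g : G, f (QuotientAddGroup.mk g) = e g) ∧
      Function.Injective f ∧ Function.Exact f b := by
  refine ⟨QuotientAddGroup.lift _ e ?_, fun g => rfl, ?_, ?_⟩
  · rintro g ⟨c, rfl⟩
    exact h1.apply_apply_eq_zero c
  · rw [injective_iff_map_eq_zero]
    intro q hq
    induction q using QuotientAddGroup.induction_on with
    | H g =>
      obtain ⟨c, hc⟩ := (h1 g).1 hq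
      exact (QuotientAddGroup.eq_zero_iff g).2 ⟨c, hc⟩
  · intro u
    rw [h2 u]
    constructor
    · rintro ⟨g, rfl⟩
      exact ⟨QuotientAddGroup.mk g, rfl⟩
    · rintro ⟨q, rfl⟩
      induction q using QuotientAddGroup.induction_on with
      | H g => exact ⟨g, rfl⟩

theorem ui_five {A B C D E A' B' C' D' E' : Type}
    [AddCommGroup A] [AddCommGroup B] [AddCommGroup C] [AddCommGroup D] [AddCommGroup E]
    [AddCommGroup A'] [AddCommGroup B'] [AddCommGroup C'] [AddCommGroup D'] [AddCommGroup E']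
    (f : A →+ B) (g : B →+ C) (h : C →+ D) (k : D →+ E)
    (f' : A' →+ B') (g' : B' →+ C') (h' : C' →+ D') (k' : D' →+ E')
    (i₁ : A →+ A') (i₂ : B →+ B') (i₃ : C →+ C') (i₄ : D →+ D') (i₅ : E →+ E')
    (c₁ : ∀ x, i₂ (f x) = f' (i₁ x)) (c₂ : ∀ x, i₃ (g x) = g' (i₂ x))
    (c₃ : ∀ x, i₄ (h x) = h' (i₃ x)) (c₄ : ∀ x, i₅ (k x) = k' (i₄ x))
    (e₁ : Function.Exact f g) (e₂ : Function.Exact g h) (e₃ : Function.Exact h k)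
    (e₁' : Function.Exact f' g') (e₂' : Function.Exact g' h') (e₃' : Function.Exact h' k')
    (h₁ : Function.Surjective i₁) (h₂ : Function.Bijective i₂)
    (h₄ : Function.Bijective i₄) (h₅ : Function.Injective i₅) : Function.Bijective i₃ :=
  AddMonoidHom.bijective_of_surjective_of_bijective_of_bijective_of_injective
    f g h k f' g' h' k' i₁ i₂ i₃ i₄ i₅
    (by ext x; exact (c₁ x).symm) (by ext x; exact (c₂ x).symm)
    (by ext x; exact (c₃ x).symm) (by ext x; exact (c₄ x).symm)
    e₁ e₂ e₃ e₁' e₂' e₃' h₁ h₂ h₄ h₅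

theorem ui_exact_zero {A B : Type} [AddCommGroup A] [AddCommGroup B] (f : A →+ B)
    (hf : Function.Injective f) : Function.Exact (0 : Unit →+ A) f := by
  intro x
  constructor
  · intro h
    exact ⟨(), ((injective_iff_map_eq_zero f).1 hf x h).symm⟩
  · rintro ⟨_, rfl⟩
    simp

theorem ui_witt_surj {C C' G G' : Type} [AddCommGroup C] [AddCommGroup C']
    [AddCommGroup G] [AddCommGroup G']
    (H : C →+ G) (H' : C' →+ G') (φC : C →+ C') (φG : G →+ G')
    (hcomm : ∀ x : C, φG (H x) = H' (φC x))
    (hC : Function.Surjective φC) (hW : Function.Surjective (wittMap H H' φC φG hcomm)) :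
    Function.Surjective φG := by
  intro y
  obtain ⟨q, hq⟩ := hW (QuotientAddGroup.mk y)
  induction q using QuotientAddGroup.induction_on with
  | H g =>
    obtain ⟨c', hc'⟩ := QuotientAddGroup.eq.1
      (show (QuotientAddGroup.mk (φG g) : G' ⧸ H'.range) = QuotientAddGroup.mk y from hq)
    obtain ⟨c, rfl⟩ := hC c'
    refine ⟨g + H c, ?_⟩
    rw [map_add, hcomm, hc']
    abel

theorem ui_U_of_witt {C G U K Q C' G' U' K' Q' : Type}
    [AddCommGroup C] [AddCommGroup G] [AddCommGroup U] [AddCommGroup K] [AddCommGroup Q]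
    [AddCommGroup C'] [AddCommGroup G'] [AddCommGroup U'] [AddCommGroup K'] [AddCommGroup Q']
    (H : C →+ G) (e : G →+ U) (b : U →+ K) (k : K →+ Q)
    (H' : C' →+ G') (e' : G' →+ U') (b' : U' →+ K') (k' : K' →+ Q')
    (φC : C →+ C') (φG : G →+ G') (φU : U →+ U') (φK : K →+ K') (φQ : Q →+ Q')
    (c₁ : ∀ x, φG (H x) = H' (φC x)) (c₂ : ∀ x, φU (e x) = e' (φG x))
    (c₃ : ∀ x, φK (b x) = b' (φU x)) (c₄ : ∀ x, φQ (k x) = k' (φK x))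
    (e₁ : Function.Exact H e) (e₂ : Function.Exact e b) (e₃ : Function.Exact b k)
    (e₁' : Function.Exact H' e') (e₂' : Function.Exact e' b') (e₃' : Function.Exact b' k')
    (hW : Function.Bijective (wittMap H H' φC φG c₁))
    (hK : Function.Bijective φK) (hQ : Function.Injective φQ) : Function.Bijective φU := by
  obtain ⟨f, hf, fi, fe⟩ := ui_exact_lift H e b e₁ e₂
  obtain ⟨f', hf', fi', fe'⟩ := ui_exact_lift H' e' b' e₁' e₂'
  refine ui_five (0 : Unit →+ _) f b k (0 : Unit →+ _) f' b' k' (AddMonoidHom.id Unit)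
    (wittMap H H' φC φG c₁) φU φK φQ (by simp) ?_ c₃ c₄ (ui_exact_zero f fi) fe e₃
    (ui_exact_zero f' fi') fe' e₃' (fun x => ⟨x, rfl⟩) hW hK hQ
  intro q
  induction q using QuotientAddGroup.induction_on with
  | H g => rw [hf, c₂]; exact (hf' (φG g)).symm

theorem ui_witt_of_U {C G U K C' G' U' K' : Type}
    [AddCommGroup C] [AddCommGroup G] [AddCommGroup U] [AddCommGroup K]
    [AddCommGroup C'] [AddCommGroup G'] [AddCommGroup U'] [AddCommGroup K']
    (H : C →+ G) (e : G →+ U) (b : U →+ K)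
    (H' : C' →+ G') (e' : G' →+ U') (b' : U' →+ K')
    (φC : C →+ C') (φG : G →+ G') (φU : U →+ U') (φK : K →+ K')
    (c₁ : ∀ x, φG (H x) = H' (φC x)) (c₂ : ∀ x, φU (e x) = e' (φG x))
    (c₃ : ∀ x, φK (b x) = b' (φU x))
    (e₁ : Function.Exact H e) (e₂ : Function.Exact e b)
    (e₁' : Function.Exact H' e') (e₂' : Function.Exact e' b')
    (hU : Function.Bijective φU) (hK : Function.Injective φK) :
    Function.Bijective (wittMap H H' φC φG c₁) := by
  obtain ⟨f, hf, fi, fe⟩ := ui_exact_lift H e b e₁ e₂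
  obtain ⟨f', hf', fi', fe'⟩ := ui_exact_lift H' e' b' e₁' e₂'
  refine ui_five (0 : Unit →+ Unit) (0 : Unit →+ _) f b (0 : Unit →+ Unit) (0 : Unit →+ _) f' b'
    (AddMonoidHom.id Unit) (AddMonoidHom.id Unit)
    (wittMap H H' φC φG c₁) φU φK (by simp) (by simp) ?_ c₃
    (ui_exact_zero _ (fun _ _ _ => rfl)) (ui_exact_zero f fi) fe
    (ui_exact_zero _ (fun _ _ _ => rfl)) (ui_exact_zero f' fi') fe'
    (fun x => ⟨x, rfl⟩) Function.bijective_id hU hK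
  intro q
  induction q using QuotientAddGroup.induction_on with
  | H g => rw [hf, c₂]; exact (hf' (φG g)).symm

/-- **Upwards Induction Theorem** (abstract diagram form).  Here `ε` ranges over
`Bool`, `!ε` playing the role of `-ε`; `K`, `KQ`, `V`, `U` (resp. their primed
versions) are the two systems, `F`/`H` the forgetful/hyperbolic maps, `a, d`
(resp. `b, e`) the remaining maps of the exact sequence of the fibration of the
forgetful (resp. hyperbolic) map, `φK, φKQ, φV, φU` the comparison maps, and
`ψ, ψ'` the isomorphisms of the Fundamental Theorem of Hermitian K-theory. -/
theorem upwards_induction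
    (K : ℤ → Type) (KQ V U : Bool → ℤ → Type)
    (K' : ℤ → Type) (KQ' V' U' : Bool → ℤ → Type)
    [∀ n, AddCommGroup (K n)] [∀ ε n, AddCommGroup (KQ ε n)]
    [∀ ε n, AddCommGroup (V ε n)] [∀ ε n, AddCommGroup (U ε n)]
    [∀ n, AddCommGroup (K' n)] [∀ ε n, AddCommGroup (KQ' ε n)]
    [∀ ε n, AddCommGroup (V' ε n)] [∀ ε n, AddCommGroup (U' ε n)]
    (F : ∀ ε n, KQ ε n →+ K n) (H : ∀ ε n, K n →+ KQ ε n)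
    (a : ∀ ε n, V ε n →+ KQ ε n) (d : ∀ ε n, K n →+ V ε (n - 1))
    (b : ∀ ε n, U ε n →+ K n) (e : ∀ ε n, KQ ε n →+ U ε (n - 1))
    (F' : ∀ ε n, KQ' ε n →+ K' n) (H' : ∀ ε n, K' n →+ KQ' ε n)
    (a' : ∀ ε n, V' ε n →+ KQ' ε n) (d' : ∀ ε n, K' n →+ V' ε (n - 1))
    (b' : ∀ ε n, U' ε n →+ K' n) (e' : ∀ ε n, KQ' ε n →+ U' ε (n - 1))
    -- exactness of the two long sequences of the first system
    (exVKQ : ∀ ε n, Function.Exact ⇑(a ε n) ⇑(F ε n))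
    (exVK : ∀ ε n, Function.Exact ⇑(F ε n) ⇑(d ε n))
    (exVV : ∀ ε n, Function.Exact ⇑(d ε n) ⇑(a ε (n - 1)))
    (exUK : ∀ ε n, Function.Exact ⇑(b ε n) ⇑(H ε n))
    (exUKQ : ∀ ε n, Function.Exact ⇑(H ε n) ⇑(e ε n))
    (exUU : ∀ ε n, Function.Exact ⇑(e ε n) ⇑(b ε (n - 1)))
    -- exactness of the two long sequences of the second system
    (exVKQ' : ∀ ε n, Function.Exact ⇑(a' ε n) ⇑(F' ε n))
    (exVK' : ∀ ε n, Function.Exact ⇑(F' ε n) ⇑(d' ε n))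
    (exVV' : ∀ ε n, Function.Exact ⇑(d' ε n) ⇑(a' ε (n - 1)))
    (exUK' : ∀ ε n, Function.Exact ⇑(b' ε n) ⇑(H' ε n))
    (exUKQ' : ∀ ε n, Function.Exact ⇑(H' ε n) ⇑(e' ε n))
    (exUU' : ∀ ε n, Function.Exact ⇑(e' ε n) ⇑(b' ε (n - 1)))
    -- comparison maps, commuting with all structure maps
    (φK : ∀ n, K n →+ K' n) (φKQ : ∀ ε n, KQ ε n →+ KQ' ε n)
    (φV : ∀ ε n, V ε n →+ V' ε n) (φU : ∀ ε n, U ε n →+ U' ε n)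
    (hφF : ∀ ε n x, φK n (F ε n x) = F' ε n (φKQ ε n x))
    (hφH : ∀ ε n x, φKQ ε n (H ε n x) = H' ε n (φK n x))
    (hφa : ∀ ε n x, φKQ ε n (a ε n x) = a' ε n (φV ε n x))
    (hφd : ∀ ε n x, φV ε (n - 1) (d ε n x) = d' ε n (φK n x))
    (hφb : ∀ ε n x, φK n (b ε n x) = b' ε n (φU ε n x))
    (hφe : ∀ ε n x, φU ε (n - 1) (e ε n x) = e' ε n (φKQ ε n x))
    -- the Fundamental Theorem of Hermitian K-theory in both systems
    (ψ : ∀ ε n, V ε n ≃+ U (!ε) (n + 1))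
    (ψ' : ∀ ε n, V' ε n ≃+ U' (!ε) (n + 1))
    (hψ : ∀ ε n x, φU (!ε) (n + 1) (ψ ε n x) = ψ' ε n (φV ε n x))
    -- hypotheses of the theorem, for a fixed `n`
    (n : ℤ)
    (hK : Function.Bijective (φK n))
    (hK1 : Function.Bijective (φK (n + 1)))
    (hKQ : ∀ ε, Function.Bijective (φKQ ε n))
    (hW1 : ∀ ε, Function.Bijective
      (wittMap (H ε (n + 1)) (H' ε (n + 1)) (φK (n + 1)) (φKQ ε (n + 1))
        (hφH ε (n + 1)))) :
    ∀ ε,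
      Function.Bijective (φU ε n) ∧
      Function.Bijective (φV ε n) ∧
      Function.Bijective (φU ε (n + 1)) ∧
      Function.Bijective (φV ε (n - 1)) ∧
      Function.Bijective (φKQ ε (n + 1)) ∧
      Function.Bijective
        (wittMap (H ε (n + 2)) (H' ε (n + 2)) (φK (n + 2)) (φKQ ε (n + 2))
          (hφH ε (n + 2))) := by
  have i1 : n + 1 - 1 = n := by ring
  have i2 : n + 2 - 1 = n + 1 := by ring
  have i3 : n - 1 + 1 = n := by ring
  have tK : ∀ m, m = n → Function.Bijective (φK m) := by rintro m rfl; exact hK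
  have tK1 : ∀ m, m = n + 1 → Function.Bijective (φK m) := by rintro m rfl; exact hK1
  have tKQ : ∀ ε m, m = n → Function.Bijective (φKQ ε m) := by rintro ε m rfl; exact hKQ ε
  have hU' : ∀ ε, Function.Bijective (φU ε (n + 1 - 1)) := fun ε =>
    ui_U_of_witt (H ε (n + 1)) (e ε (n + 1)) (b ε (n + 1 - 1)) (H ε (n + 1 - 1))
      (H' ε (n + 1)) (e' ε (n + 1)) (b' ε (n + 1 - 1)) (H' ε (n + 1 - 1))
      (φK _) (φKQ ε _) (φU ε _) (φK _) (φKQ ε _)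
      (hφH ε _) (hφe ε _) (hφb ε _) (hφH ε _)
      (exUKQ ε _) (exUU ε _) (exUK ε _) (exUKQ' ε _) (exUU' ε _) (exUK' ε _)
      (hW1 ε) (tK _ i1) (tKQ ε _ i1).1
  have tU : ∀ ε m, m = n → Function.Bijective (φU ε m) := by
    intro ε m hm
    have : m = n + 1 - 1 := by omega
    subst this
    exact hU' ε
  have hKQs : ∀ ε, Function.Surjective (φKQ ε (n + 1)) := fun ε =>
    ui_witt_surj _ _ _ _ (hφH ε (n + 1)) hK1.2 (hW1 ε).2
  have hV' : ∀ ε, Function.Bijective (φV ε (n + 1 - 1)) := fun ε =>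
    ui_five (F ε (n + 1)) (d ε (n + 1)) (a ε (n + 1 - 1)) (F ε (n + 1 - 1))
      (F' ε (n + 1)) (d' ε (n + 1)) (a' ε (n + 1 - 1)) (F' ε (n + 1 - 1))
      (φKQ ε _) (φK _) (φV ε _) (φKQ ε _) (φK _)
      (hφF ε _) (hφd ε _) (hφa ε _) (hφF ε _)
      (exVK ε _) (exVV ε _) (exVKQ ε _) (exVK' ε _) (exVV' ε _) (exVKQ' ε _)
      (hKQs ε) hK1 (tKQ ε _ i1) (tK _ i1).1
  have hV : ∀ ε, Function.Bijective (φV ε n) := by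
    intro ε
    have : ∀ m, m = n + 1 - 1 → Function.Bijective (φV ε m) := by rintro m rfl; exact hV' ε
    exact this n i1.symm
  have hUV : ∀ ε m, Function.Bijective (φU (!ε) (m + 1)) ↔ Function.Bijective (φV ε m) := by
    intro ε m
    have h : ⇑(φU (!ε) (m + 1)) ∘ ⇑(ψ ε m) = ⇑(ψ' ε m) ∘ ⇑(φV ε m) := funext (hψ ε m)
    rw [← Function.Bijective.of_comp_iff _ (ψ ε m).bijective, h,
      Function.Bijective.of_comp_iff' (ψ' ε m).bijective]
  have hU1 : ∀ ε, Function.Bijective (φU ε (n + 1)) := by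
    intro ε
    have h := (hUV (!ε) n).2 (hV _)
    rwa [Bool.not_not] at h
  have tU1 : ∀ ε m, m = n + 1 → Function.Bijective (φU ε m) := by
    rintro ε m rfl; exact hU1 ε
  intro ε
  refine ⟨tU ε n rfl, hV ε, hU1 ε, (hUV ε (n - 1)).1 (tU _ _ i3), ?_, ?_⟩
  · exact ui_five (b ε (n + 1)) (H ε (n + 1)) (e ε (n + 1)) (b ε (n + 1 - 1))
      (b' ε (n + 1)) (H' ε (n + 1)) (e' ε (n + 1)) (b' ε (n + 1 - 1))
      (φU ε _) (φK _) (φKQ ε _) (φU ε _) (φK _)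
      (hφb ε _) (hφH ε _) (hφe ε _) (hφb ε _)
      (exUK ε _) (exUKQ ε _) (exUU ε _) (exUK' ε _) (exUKQ' ε _) (exUU' ε _)
      (hU1 ε).2 hK1 (hU' ε) (tK _ i1).1
  · exact ui_witt_of_U (H ε (n + 2)) (e ε (n + 2)) (b ε (n + 2 - 1))
      (H' ε (n + 2)) (e' ε (n + 2)) (b' ε (n + 2 - 1))
      (φK _) (φKQ ε _) (φU ε _) (φK _) (hφH ε _) (hφe ε _) (hφb ε _)
      (exUKQ ε _) (exUU ε _) (exUKQ' ε _) (exUU' ε _) (tU1 ε _ i2) (tK1 _ i2).1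
end

section
/- Corollary to the Upwards Induction Theorem (abstract form). Let l ∈ ℤ. Assume that φ : KQ_l^ε → KQ̄_l^ε and φ : KQ_{l+1}^ε → KQ̄_{l+1}^ε are isomorphisms for both ε = 1 and ε = −1, and that φ : K_n → K̄_n is an isomorphism for every n ≥ l. Then for every n ≥ l and both ε = 1 and ε = −1, the comparison maps φ : KQ_n^ε → KQ̄_n^ε, φ : V_n^ε → V̄_n^ε, and φ : U_n^ε → Ū_n^ε are isomorphisms. -/
theorem four_surj_aux {A B C D A' B' C' D' : Type}
    [AddCommGroup A] [AddCommGroup B] [AddCommGroup C] [AddCommGroup D]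
    [AddCommGroup A'] [AddCommGroup B'] [AddCommGroup C'] [AddCommGroup D']
    {f : A →+ B} {g : B →+ C} {h : C →+ D} {f' : A' →+ B'} {g' : B' →+ C'} {h' : C' →+ D'}
    {p : A →+ A'} {q : B →+ B'} {r : C →+ C'} {s : D →+ D'}
    (c1 : ∀ x, q (f x) = f' (p x)) (c2 : ∀ x, r (g x) = g' (q x)) (c3 : ∀ x, s (h x) = h' (r x))
    (e2 : Function.Exact g h) (e1' : Function.Exact f' g') (e2' : Function.Exact g' h')
    (hp : Function.Surjective p) (hr : Function.Surjective r) (hs : Function.Injective s) :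
    Function.Surjective q :=
  AddMonoidHom.surjective_of_surjective_of_surjective_of_injective f g h f' g' h' p q r s
    (by ext x; exact (c1 x).symm) (by ext x; exact (c2 x).symm) (by ext x; exact (c3 x).symm)
    e2 e1' e2' hp hr hs

theorem four_inj_aux {A B C D A' B' C' D' : Type}
    [AddCommGroup A] [AddCommGroup B] [AddCommGroup C] [AddCommGroup D]
    [AddCommGroup A'] [AddCommGroup B'] [AddCommGroup C'] [AddCommGroup D']
    {f : A →+ B} {g : B →+ C} {h : C →+ D} {f' : A' →+ B'} {g' : B' →+ C'} {h' : C' →+ D'}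
    {p : A →+ A'} {q : B →+ B'} {r : C →+ C'} {s : D →+ D'}
    (c1 : ∀ x, q (f x) = f' (p x)) (c2 : ∀ x, r (g x) = g' (q x)) (c3 : ∀ x, s (h x) = h' (r x))
    (e1 : Function.Exact f g) (e2 : Function.Exact g h) (e1' : Function.Exact f' g')
    (hp : Function.Surjective p) (hq : Function.Injective q) (hs : Function.Injective s) :
    Function.Injective r :=
  AddMonoidHom.injective_of_surjective_of_injective_of_injective f g h f' g' h' p q r s
    (by ext x; exact (c1 x).symm) (by ext x; exact (c2 x).symm) (by ext x; exact (c3 x).symm)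
    e1 e2 e1' hp hq hs

/-- **Corollary to the Upwards Induction Theorem** (abstract form).  Here `ε`
ranges over `Bool`, `!ε` playing the role of `-ε`; see the Upwards Induction
Theorem for the meaning of the data. -/
theorem upwards_induction_corollary
    (K : ℤ → Type) (KQ V U : Bool → ℤ → Type)
    (K' : ℤ → Type) (KQ' V' U' : Bool → ℤ → Type)
    [∀ n, AddCommGroup (K n)] [∀ ε n, AddCommGroup (KQ ε n)]
    [∀ ε n, AddCommGroup (V ε n)] [∀ ε n, AddCommGroup (U ε n)]
    [∀ n, AddCommGroup (K' n)] [∀ ε n, AddCommGroup (KQ' ε n)]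
    [∀ ε n, AddCommGroup (V' ε n)] [∀ ε n, AddCommGroup (U' ε n)]
    (F : ∀ ε n, KQ ε n →+ K n) (H : ∀ ε n, K n →+ KQ ε n)
    (a : ∀ ε n, V ε n →+ KQ ε n) (d : ∀ ε n, K n →+ V ε (n - 1))
    (b : ∀ ε n, U ε n →+ K n) (e : ∀ ε n, KQ ε n →+ U ε (n - 1))
    (F' : ∀ ε n, KQ' ε n →+ K' n) (H' : ∀ ε n, K' n →+ KQ' ε n)
    (a' : ∀ ε n, V' ε n →+ KQ' ε n) (d' : ∀ ε n, K' n →+ V' ε (n - 1))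
    (b' : ∀ ε n, U' ε n →+ K' n) (e' : ∀ ε n, KQ' ε n →+ U' ε (n - 1))
    -- exactness of the two long sequences of the first system
    (exVKQ : ∀ ε n, Function.Exact ⇑(a ε n) ⇑(F ε n))
    (exVK : ∀ ε n, Function.Exact ⇑(F ε n) ⇑(d ε n))
    (exVV : ∀ ε n, Function.Exact ⇑(d ε n) ⇑(a ε (n - 1)))
    (exUK : ∀ ε n, Function.Exact ⇑(b ε n) ⇑(H ε n))
    (exUKQ : ∀ ε n, Function.Exact ⇑(H ε n) ⇑(e ε n))
    (exUU : ∀ ε n, Function.Exact ⇑(e ε n) ⇑(b ε (n - 1)))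
    -- exactness of the two long sequences of the second system
    (exVKQ' : ∀ ε n, Function.Exact ⇑(a' ε n) ⇑(F' ε n))
    (exVK' : ∀ ε n, Function.Exact ⇑(F' ε n) ⇑(d' ε n))
    (exVV' : ∀ ε n, Function.Exact ⇑(d' ε n) ⇑(a' ε (n - 1)))
    (exUK' : ∀ ε n, Function.Exact ⇑(b' ε n) ⇑(H' ε n))
    (exUKQ' : ∀ ε n, Function.Exact ⇑(H' ε n) ⇑(e' ε n))
    (exUU' : ∀ ε n, Function.Exact ⇑(e' ε n) ⇑(b' ε (n - 1)))
    -- comparison maps, commuting with all structure maps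
    (φK : ∀ n, K n →+ K' n) (φKQ : ∀ ε n, KQ ε n →+ KQ' ε n)
    (φV : ∀ ε n, V ε n →+ V' ε n) (φU : ∀ ε n, U ε n →+ U' ε n)
    (hφF : ∀ ε n x, φK n (F ε n x) = F' ε n (φKQ ε n x))
    (hφH : ∀ ε n x, φKQ ε n (H ε n x) = H' ε n (φK n x))
    (hφa : ∀ ε n x, φKQ ε n (a ε n x) = a' ε n (φV ε n x))
    (hφd : ∀ ε n x, φV ε (n - 1) (d ε n x) = d' ε n (φK n x))
    (hφb : ∀ ε n x, φK n (b ε n x) = b' ε n (φU ε n x))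
    (hφe : ∀ ε n x, φU ε (n - 1) (e ε n x) = e' ε n (φKQ ε n x))
    -- the Fundamental Theorem of Hermitian K-theory in both systems
    (ψ : ∀ ε n, V ε n ≃+ U (!ε) (n + 1))
    (ψ' : ∀ ε n, V' ε n ≃+ U' (!ε) (n + 1))
    (hψ : ∀ ε n x, φU (!ε) (n + 1) (ψ ε n x) = ψ' ε n (φV ε n x))
    -- hypotheses of the corollary, for a fixed `l`
    (l : ℤ)
    (hKQl : ∀ ε, Function.Bijective (φKQ ε l))
    (hKQl1 : ∀ ε, Function.Bijective (φKQ ε (l + 1)))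
    (hK : ∀ n : ℤ, l ≤ n → Function.Bijective (φK n)) :
    ∀ n : ℤ, l ≤ n → ∀ ε,
      Function.Bijective (φKQ ε n) ∧
      Function.Bijective (φV ε n) ∧
      Function.Bijective (φU ε n) := by
  -- V from KQ and K
  have hV : ∀ ε n, l ≤ n - 1 → Function.Surjective (φKQ ε n) →
      Function.Bijective (φKQ ε (n - 1)) → Function.Bijective (φV ε (n - 1)) := by
    intro ε n hn h1 h2
    have k1 := hK n (by omega)
    have k2 := hK (n - 1) hn
    exact ⟨four_inj_aux (hφF ε n) (hφd ε n) (hφa ε (n - 1)) (exVK ε n) (exVV ε n) (exVK' ε n)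
        h1 k1.1 h2.1,
      four_surj_aux (hφd ε n) (hφa ε (n - 1)) (hφF ε (n - 1)) (exVKQ ε (n - 1)) (exVV' ε n)
        (exVKQ' ε (n - 1)) k1.2 h2.2 k2.1⟩
  have hU : ∀ ε n, l ≤ n - 1 → Function.Bijective (φKQ ε n) →
      Function.Bijective (φKQ ε (n - 1)) → Function.Bijective (φU ε (n - 1)) := by
    intro ε n hn h1 h2
    have k1 := hK n (by omega)
    have k2 := hK (n - 1) hn
    exact ⟨four_inj_aux (hφH ε n) (hφe ε n) (hφb ε (n - 1)) (exUKQ ε n) (exUU ε n) (exUKQ' ε n)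
        k1.2 h1.1 k2.1,
      four_surj_aux (hφe ε n) (hφb ε (n - 1)) (hφH ε (n - 1)) (exUK ε (n - 1)) (exUU' ε n)
        (exUK' ε (n - 1)) h1.2 k2.2 h2.1⟩
  have hQs : ∀ ε n, l ≤ n - 1 → Function.Surjective (φU ε (n - 1)) →
      Function.Surjective (φKQ ε n) := by
    intro ε n hn h1
    exact four_surj_aux (hφH ε n) (hφe ε n) (hφb ε (n - 1)) (exUU ε n) (exUKQ' ε n)
      (exUU' ε n) (hK n (by omega)).2 h1 (hK (n - 1) hn).1
  have hQi : ∀ ε n, l ≤ n - 1 → Function.Injective (φU ε (n - 1)) →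
      Function.Surjective (φU ε n) → Function.Injective (φKQ ε n) := by
    intro ε n hn h1 h2
    exact four_inj_aux (hφb ε n) (hφH ε n) (hφe ε n) (exUK ε n) (exUKQ ε n) (exUK' ε n)
      h2 (hK n (by omega)).1 h1
  have hVU : ∀ ε n, Function.Bijective (φV (!ε) (n - 1)) → Function.Bijective (φU ε n) := by
    intro ε n h
    have key : Function.Bijective (φU (!(!ε)) (n - 1 + 1)) := by
      have : ⇑(φU (!(!ε)) (n - 1 + 1)) =
          ⇑(ψ' (!ε) (n - 1)) ∘ ⇑(φV (!ε) (n - 1)) ∘ ⇑(ψ (!ε) (n - 1)).symm := by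
        funext x
        have := hψ (!ε) (n - 1) ((ψ (!ε) (n - 1)).symm x)
        rw [AddEquiv.apply_symm_apply] at this
        exact this
      rw [this]
      exact (ψ' (!ε) (n - 1)).bijective.comp (h.comp (ψ (!ε) (n - 1)).symm.bijective)
    rwa [Bool.not_not, sub_add_cancel] at key
  have main : ∀ n, l ≤ n →
      (∀ ε, Function.Bijective (φKQ ε n)) ∧ (∀ ε, Function.Bijective (φKQ ε (n + 1))) := by
    intro n hn
    induction n, hn using Int.leInduction with
    | base => exact ⟨hKQl, hKQl1⟩
    | succ n hn ih =>
      obtain ⟨i1, i2⟩ := ih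
      refine ⟨i2, ?_⟩
      have e1 : n + 1 - 1 = n := by ring
      have e2 : n + 1 + 1 - 1 = n + 1 := by ring
      have u1 : ∀ ε, Function.Bijective (φU ε (n + 1 + 1 - 1)) := by
        intro ε
        rw [e2]
        exact hVU ε (n + 1) (hV (!ε) (n + 1) (by omega) (i2 _).2 (by rw [e1]; exact i1 _))
      have s : ∀ ε, Function.Surjective (φKQ ε (n + 1 + 1)) := fun ε =>
        hQs ε _ (by omega) (u1 ε).2
      have u2 : ∀ ε, Function.Bijective (φU ε (n + 1 + 1)) := fun ε =>
        hVU ε _ (hV (!ε) _ (by omega) (s _) (by rw [e2]; exact i2 _))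
      exact fun ε => ⟨hQi ε _ (by omega) (u1 ε).1 (u2 ε).2, s ε⟩
  intro n hn ε
  obtain ⟨i1, i2⟩ := main n hn
  have e1 : n + 1 - 1 = n := by ring
  have v := hV ε (n + 1) (by omega) (i2 ε).2 (by rw [e1]; exact i1 ε)
  have u := hU ε (n + 1) (by omega) (i2 ε) (by rw [e1]; exact i1 ε)
  rw [e1] at v u
  exact ⟨i1 ε, v, u⟩
end
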